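/- Assume M = Q and X̄₀^red ∈ ℝ^{Q×Q} is invertible. Let W₂* := Y·(X̄₀^red)ᵀ·(X₀𝒩⁻¹X₀ᵀ)⁻¹ and W̃₂ := Y·(X̄₀^red)⁻¹. Then W₂* − W̃₂ = −Y·Δ₂^rel·(1 + Δ₂^rel)⁻¹·(X̄₀^red)⁻¹, and consequently ‖W₂* − W̃₂‖_op ≤ ‖Y‖_op · ‖Δ₂^rel‖_op · ‖(X̄₀^red)⁻¹‖_op. -/

import Mathlib

/-!
Write `A` for the matrix of class means and `D` for `Δ₂^rel`. Deviations from the class means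
average to zero within each class, so the cross terms in `X₀ 𝒩⁻¹ X₀ᵀ` vanish and
`X₀ 𝒩⁻¹ X₀ᵀ = A Aᵀ + ΔX₀ 𝒩⁻¹ ΔX₀ᵀ = A (1 + D) Aᵀ`.
Inverting gives `W₂* = Y (1 + D)⁻¹ A⁻¹`, and the identity follows from
`(1 + D)⁻¹ - 1 = -D (1 + D)⁻¹`. The norm bound is submultiplicativity together with
`‖(1 + D)⁻¹‖ ≤ 1`, valid because `1 + D` does not shrink vectors when `D` is positive semidefinite.
-/

open Matrix

noncomputable section

/-- Index type for training inputs: class `j ∈ {1,…,Q}` and sample `i ∈ {1,…,N_j}`. -/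
abbrev Idx (Q : ℕ) (Nc : Fin Q → ℕ) : Type := (j : Fin Q) × Fin (Nc j)

/-- The matrix `X̄₀^red ∈ ℝ^{M×Q}` of class means `x̄_{0,j} = (1/N_j)·Σ_i x_{0,j,i}`. -/
def classMeans {Q M : ℕ} (Nc : Fin Q → ℕ) (X : Matrix (Fin M) (Idx Q Nc) ℝ) :
    Matrix (Fin M) (Fin Q) ℝ :=
  Matrix.of fun m j => (Nc j : ℝ)⁻¹ * ∑ i : Fin (Nc j), X m ⟨j, i⟩

/-- The matrix `X̄₀ ∈ ℝ^{M×N}` with column `x̄_{0,j}` at each position of class `j`. -/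
def barX {Q M : ℕ} (Nc : Fin Q → ℕ) (X : Matrix (Fin M) (Idx Q Nc) ℝ) :
    Matrix (Fin M) (Idx Q Nc) ℝ :=
  Matrix.of fun m p => classMeans Nc X m p.1

/-- The deviation matrix `ΔX₀ := X₀ − X̄₀`. -/
def deltaX {Q M : ℕ} (Nc : Fin Q → ℕ) (X : Matrix (Fin M) (Idx Q Nc) ℝ) :
    Matrix (Fin M) (Idx Q Nc) ℝ := X - barX Nc X

/-- The block-diagonal weight matrix `𝒩 = diag(N_j·1_{N_j×N_j})`. -/
def calN (Q : ℕ) (Nc : Fin Q → ℕ) : Matrix (Idx Q Nc) (Idx Q Nc) ℝ :=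
  Matrix.diagonal fun p => (Nc p.1 : ℝ)

/-- The extended target matrix `Y^ext ∈ ℝ^{Q×N}`: column `y_j` at each position of class `j`. -/
def Yext {Q : ℕ} (Nc : Fin Q → ℕ) (Y : Matrix (Fin Q) (Fin Q) ℝ) :
    Matrix (Fin Q) (Idx Q Nc) ℝ :=
  Matrix.of fun q p => Y q p.1

/-- Entrywise ReLU on matrices: `σ(A)_{kl} = max(0, A_{kl})`. -/
def relu {m n : Type*} (A : Matrix m n ℝ) : Matrix m n ℝ :=
  Matrix.of fun i j => max 0 (A i j)

/-- Euclidean norm of a vector in `ℝ^k`. -/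
def enorm {k : ℕ} (v : Fin k → ℝ) : ℝ := Real.sqrt (∑ i, (v i) ^ 2)

/-- Frobenius (Hilbert–Schmidt) norm `‖B‖_F = √Tr(BBᵀ)`. -/
def frob {m n : Type*} [Fintype m] [Fintype n] (A : Matrix m n ℝ) : ℝ :=
  Real.sqrt (Matrix.trace (A * Aᵀ))

/-- The replicated-bias matrix `b·u_Nᵀ ∈ ℝ^{M×N}`. -/
def colRep {Q M : ℕ} (Nc : Fin Q → ℕ) (b : Fin M → ℝ) : Matrix (Fin M) (Idx Q Nc) ℝ :=
  Matrix.of fun m _ => b m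

/-- The weighted `L²_𝒩` norm `‖A‖ = √Tr(A𝒩⁻¹Aᵀ)`. -/
def l2N {Q M : ℕ} (Nc : Fin Q → ℕ) (A : Matrix (Fin M) (Idx Q Nc) ℝ) : ℝ :=
  Real.sqrt (Matrix.trace (A * (calN Q Nc)⁻¹ * Aᵀ))

/-- `ℓ²→ℓ²` operator norm of a matrix. -/
def opNorm {m n : ℕ} (A : Matrix (Fin m) (Fin n) ℝ) : ℝ :=
  ‖LinearMap.toContinuousLinearMap (Matrix.toEuclideanLin A)‖

/-- `Δ₁^rel := (X̄₀^red)⁻¹ · ΔX₀`. -/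
def Del1 {Q : ℕ} (Nc : Fin Q → ℕ) (X₀ : Matrix (Fin Q) (Idx Q Nc) ℝ) :
    Matrix (Fin Q) (Idx Q Nc) ℝ :=
  (classMeans Nc X₀)⁻¹ * deltaX Nc X₀

/-- `Δ₂^rel := Δ₁^rel · 𝒩⁻¹ · (Δ₁^rel)ᵀ`. -/
def Del2 {Q : ℕ} (Nc : Fin Q → ℕ) (X₀ : Matrix (Fin Q) (Idx Q Nc) ℝ) :
    Matrix (Fin Q) (Fin Q) ℝ :=
  Del1 Nc X₀ * (calN Q Nc)⁻¹ * (Del1 Nc X₀)ᵀ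

/-- The projector `𝒫 := 𝒩⁻¹X₀ᵀ(X₀𝒩⁻¹X₀ᵀ)⁻¹X₀`. -/
def Pmat {Q M : ℕ} (Nc : Fin Q → ℕ) (X₀ : Matrix (Fin M) (Idx Q Nc) ℝ) :
    Matrix (Idx Q Nc) (Idx Q Nc) ℝ :=
  (calN Q Nc)⁻¹ * X₀ᵀ * (X₀ * (calN Q Nc)⁻¹ * X₀ᵀ)⁻¹ * X₀

section Resolvent

open scoped Matrix.Norms.L2Operator ComplexOrder

variable {𝕜 : Type*} [RCLike 𝕜]

lemma norm_le_norm_add_of_re_inner_nonneg {E : Type*} [SeminormedAddCommGroup E]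
    [InnerProductSpace 𝕜 E] {x y : E} (h : 0 ≤ RCLike.re (inner 𝕜 x y)) : ‖x‖ ≤ ‖x + y‖ := by
  refine le_of_sq_le_sq ?_ (norm_nonneg _)
  rw [norm_add_sq (𝕜 := 𝕜)]
  nlinarith [sq_nonneg ‖y‖]

variable {n : Type*} [Fintype n] [DecidableEq n] {D : Matrix n n 𝕜}

lemma isUnit_one_add_of_posSemidef (hD : D.PosSemidef) : IsUnit (1 + D) :=
  (PosDef.one.add_posSemidef hD).isUnit

lemma l2_opNorm_inv_one_add_le_one (hD : D.PosSemidef) : ‖(1 + D)⁻¹‖ ≤ 1 := by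
  rw [l2_opNorm_def]
  refine ContinuousLinearMap.opNorm_le_bound _ zero_le_one fun v => ?_
  set w := toEuclideanLin (1 + D)⁻¹ v with hw
  have hv : w + toEuclideanLin D w = v := by
    have hdet := (isUnit_iff_isUnit_det _).mp (isUnit_one_add_of_posSemidef hD)
    ext1
    simp only [hw, WithLp.ofLp_add, ofLp_toLpLin, toLin'_apply, mulVec_mulVec, ← add_mulVec]
    rw [← one_add_mul, mul_nonsing_inv _ hdet, one_mulVec]
  have hpos : 0 ≤ RCLike.re (inner 𝕜 w (toEuclideanLin D w)) :=
    (isPositive_toEuclideanLin_iff.mpr hD).re_inner_nonneg_right w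
  calc ‖w‖ ≤ ‖w + toEuclideanLin D w‖ := norm_le_norm_add_of_re_inner_nonneg hpos
    _ = 1 * ‖v‖ := by rw [hv, one_mul]

lemma l2_opNorm_mul_inv_one_add_mul_le {l m : Type*} [Fintype l] [Fintype m] [DecidableEq m]
    (hD : D.PosSemidef) (Y : Matrix l n 𝕜) (B : Matrix n m 𝕜) :
    ‖Y * D * (1 + D)⁻¹ * B‖ ≤ ‖Y‖ * ‖D‖ * ‖B‖ :=
  calc ‖Y * D * (1 + D)⁻¹ * B‖
      ≤ ‖Y * D * (1 + D)⁻¹‖ * ‖B‖ := l2_opNorm_mul _ _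
    _ ≤ ‖Y * D‖ * ‖(1 + D)⁻¹‖ * ‖B‖ := by gcongr; exact l2_opNorm_mul _ _
    _ ≤ ‖Y‖ * ‖D‖ * 1 * ‖B‖ := by
        gcongr
        · exact l2_opNorm_mul _ _
        · exact l2_opNorm_inv_one_add_le_one hD
    _ = ‖Y‖ * ‖D‖ * ‖B‖ := by rw [mul_one]

lemma opNorm_neg {m n : ℕ} (A : Matrix (Fin m) (Fin n) ℝ) : opNorm (-A) = opNorm A :=
  norm_neg A

lemma opNorm_mul_inv_one_add_mul_le {l m n : ℕ} {D : Matrix (Fin n) (Fin n) ℝ}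
    (hD : D.PosSemidef) (Y : Matrix (Fin l) (Fin n) ℝ) (B : Matrix (Fin n) (Fin m) ℝ) :
    opNorm (Y * D * (1 + D)⁻¹ * B) ≤ opNorm Y * opNorm D * opNorm B :=
  l2_opNorm_mul_inv_one_add_mul_le hD Y B

end Resolvent

lemma mul_inv_mul_one_add_mul_sub_mul_inv {R m n : Type*} [CommRing R] [Fintype n] [DecidableEq n]
    (Y : Matrix m n R) (A : Matrix n n R) {B D : Matrix n n R} (hB : IsUnit B)
    (hD : IsUnit (1 + D)) :
    Y * B * (A * (1 + D) * B)⁻¹ - Y * A⁻¹ = -(Y * D * (1 + D)⁻¹ * A⁻¹) := by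
  rw [isUnit_iff_isUnit_det] at hB hD
  have resolvent : (1 + D)⁻¹ - 1 = -(D * (1 + D)⁻¹) := by
    have hinv : (1 + D)⁻¹ + D * (1 + D)⁻¹ = 1 := by
      rw [← one_add_mul, mul_nonsing_inv _ hD]
    rw [sub_eq_iff_eq_add, neg_add_eq_sub, eq_sub_iff_add_eq, hinv]
  calc Y * B * (A * (1 + D) * B)⁻¹ - Y * A⁻¹
      = Y * ((1 + D)⁻¹ - 1) * A⁻¹ := by
        rw [Matrix.mul_inv_rev, Matrix.mul_inv_rev, Matrix.mul_assoc Y,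
          mul_nonsing_inv_cancel_left _ _ hB, Matrix.mul_sub, Matrix.sub_mul, Matrix.mul_one,
          Matrix.mul_assoc Y]
    _ = -(Y * D * (1 + D)⁻¹ * A⁻¹) := by
        rw [resolvent, Matrix.mul_neg, Matrix.neg_mul, ← Matrix.mul_assoc Y]

section ClassMeans

variable {Q M M' : ℕ} (Nc : Fin Q → ℕ)

lemma calN_inv : (calN Q Nc)⁻¹ = diagonal fun p => (Nc p.1 : ℝ)⁻¹ := by
  have hne (p : Idx Q Nc) : (Nc p.1 : ℝ) ≠ 0 := Nat.cast_ne_zero.mpr p.2.pos.ne'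
  refine inv_eq_left_inv ?_
  simp only [calN, diagonal_mul_diagonal, inv_mul_cancel₀ (hne _), diagonal_one]

lemma posSemidef_calN_inv : (calN Q Nc)⁻¹.PosSemidef :=
  (PosSemidef.diagonal fun _ => Nat.cast_nonneg _).inv

lemma mul_calN_inv_mul_transpose_barX (X : Matrix (Fin M) (Idx Q Nc) ℝ)
    (Z : Matrix (Fin M') (Idx Q Nc) ℝ) :
    X * (calN Q Nc)⁻¹ * (barX Nc Z)ᵀ = classMeans Nc X * (classMeans Nc Z)ᵀ := by
  ext m m'
  rw [calN_inv, mul_apply, mul_apply, Fintype.sum_sigma]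
  refine Finset.sum_congr rfl fun j _ => ?_
  simp only [mul_diagonal, transpose_apply, barX, of_apply, ← Finset.sum_mul]
  rw [mul_comm (∑ i, X m ⟨j, i⟩)]
  rfl

lemma classMeans_barX (X : Matrix (Fin M) (Idx Q Nc) ℝ) :
    classMeans Nc (barX Nc X) = classMeans Nc X := by
  ext m j
  -- An empty class has mean `0` on both sides, because `0⁻¹ = 0`.
  have hcancel : (Nc j : ℝ)⁻¹ * Nc j * (Nc j : ℝ)⁻¹ = (Nc j : ℝ)⁻¹ := by
    simpa only [inv_inv] using mul_inv_mul_cancel (Nc j : ℝ)⁻¹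
  calc (Nc j : ℝ)⁻¹ * ∑ _i : Fin (Nc j), classMeans Nc X m j
      = (Nc j : ℝ)⁻¹ * (Nc j * ((Nc j : ℝ)⁻¹ * ∑ i, X m ⟨j, i⟩)) := by
        rw [Fin.sum_const, nsmul_eq_mul]
        rfl
    _ = (Nc j : ℝ)⁻¹ * ∑ i, X m ⟨j, i⟩ := by
        rw [← mul_assoc, ← mul_assoc, hcancel]

lemma classMeans_deltaX (X : Matrix (Fin M) (Idx Q Nc) ℝ) : classMeans Nc (deltaX Nc X) = 0 := by
  have classMeans_sub :
      classMeans Nc (deltaX Nc X) = classMeans Nc X - classMeans Nc (barX Nc X) := by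
    ext m j
    simp only [classMeans, deltaX, of_apply, Matrix.sub_apply, Finset.sum_sub_distrib, mul_sub]
  rw [classMeans_sub, classMeans_barX, sub_self]

lemma barX_mul_calN_inv_mul_transpose_deltaX (X : Matrix (Fin M) (Idx Q Nc) ℝ)
    (Z : Matrix (Fin M') (Idx Q Nc) ℝ) :
    barX Nc X * (calN Q Nc)⁻¹ * (deltaX Nc Z)ᵀ = 0 := by
  rw [← transpose_eq_zero]
  calc (barX Nc X * (calN Q Nc)⁻¹ * (deltaX Nc Z)ᵀ)ᵀ
      = deltaX Nc Z * (calN Q Nc)⁻¹ * (barX Nc X)ᵀ := by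
        simp only [calN_inv, transpose_mul, transpose_transpose, diagonal_transpose,
          Matrix.mul_assoc]
    _ = 0 := by rw [mul_calN_inv_mul_transpose_barX, classMeans_deltaX, Matrix.zero_mul]

lemma mul_calN_inv_mul_transpose (X : Matrix (Fin M) (Idx Q Nc) ℝ)
    (Z : Matrix (Fin M') (Idx Q Nc) ℝ) :
    X * (calN Q Nc)⁻¹ * Zᵀ =
      classMeans Nc X * (classMeans Nc Z)ᵀ + deltaX Nc X * (calN Q Nc)⁻¹ * (deltaX Nc Z)ᵀ := by
  have hX : barX Nc X + deltaX Nc X = X := add_sub_cancel _ _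
  have hZ : barX Nc Z + deltaX Nc Z = Z := add_sub_cancel _ _
  calc X * (calN Q Nc)⁻¹ * Zᵀ
      = X * (calN Q Nc)⁻¹ * (barX Nc Z)ᵀ + X * (calN Q Nc)⁻¹ * (deltaX Nc Z)ᵀ := by
        rw [← Matrix.mul_add, ← transpose_add, hZ]
    _ = X * (calN Q Nc)⁻¹ * (barX Nc Z)ᵀ + (barX Nc X * (calN Q Nc)⁻¹ * (deltaX Nc Z)ᵀ +
          deltaX Nc X * (calN Q Nc)⁻¹ * (deltaX Nc Z)ᵀ) := by
        rw [← Matrix.add_mul, ← Matrix.add_mul, hX]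
    _ = classMeans Nc X * (classMeans Nc Z)ᵀ + deltaX Nc X * (calN Q Nc)⁻¹ * (deltaX Nc Z)ᵀ := by
        rw [mul_calN_inv_mul_transpose_barX, barX_mul_calN_inv_mul_transpose_deltaX, zero_add]

variable (X₀ : Matrix (Fin Q) (Idx Q Nc) ℝ)

lemma posSemidef_Del2 : (Del2 Nc X₀).PosSemidef := by
  rw [Del2, ← conjTranspose_eq_transpose_of_trivial]
  exact (posSemidef_calN_inv Nc).mul_mul_conjTranspose_same _

variable {Nc X₀}

lemma classMeans_mul_Del1 (hred : IsUnit (classMeans Nc X₀)) :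
    classMeans Nc X₀ * Del1 Nc X₀ = deltaX Nc X₀ :=
  mul_nonsing_inv_cancel_left _ _ ((isUnit_iff_isUnit_det _).mp hred)

lemma mul_calN_inv_mul_transpose_eq_conj_one_add_Del2 (hred : IsUnit (classMeans Nc X₀)) :
    X₀ * (calN Q Nc)⁻¹ * X₀ᵀ = classMeans Nc X₀ * (1 + Del2 Nc X₀) * (classMeans Nc X₀)ᵀ := by
  rw [mul_calN_inv_mul_transpose, ← classMeans_mul_Del1 hred, Del2]
  simp only [transpose_mul, Matrix.mul_add, Matrix.add_mul, Matrix.mul_one, Matrix.mul_assoc]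

end ClassMeans

/-- For `M = Q` with `X̄₀^red` invertible, `W₂* := Y(X̄₀^red)ᵀ(X₀𝒩⁻¹X₀ᵀ)⁻¹`
and `W̃₂ := Y(X̄₀^red)⁻¹` satisfy
`W₂* − W̃₂ = −Y·Δ₂^rel·(1 + Δ₂^rel)⁻¹·(X̄₀^red)⁻¹`, and consequently
`‖W₂* − W̃₂‖_op ≤ ‖Y‖_op·‖Δ₂^rel‖_op·‖(X̄₀^red)⁻¹‖_op`. -/
theorem statement16 {Q : ℕ} (Nc : Fin Q → ℕ) (hNc : ∀ j, 0 < Nc j)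
    (X₀ : Matrix (Fin Q) (Idx Q Nc) ℝ)
    (hred : IsUnit (classMeans Nc X₀))
    (Y : Matrix (Fin Q) (Fin Q) ℝ) :
    Y * (classMeans Nc X₀)ᵀ * (X₀ * (calN Q Nc)⁻¹ * X₀ᵀ)⁻¹ - Y * (classMeans Nc X₀)⁻¹ =
      -(Y * Del2 Nc X₀ * (1 + Del2 Nc X₀)⁻¹ * (classMeans Nc X₀)⁻¹) ∧
    opNorm (Y * (classMeans Nc X₀)ᵀ * (X₀ * (calN Q Nc)⁻¹ * X₀ᵀ)⁻¹ -
        Y * (classMeans Nc X₀)⁻¹) ≤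
      opNorm Y * opNorm (Del2 Nc X₀) * opNorm ((classMeans Nc X₀)⁻¹) := by
  have hpsd := posSemidef_Del2 Nc X₀
  have hdiff := mul_inv_mul_one_add_mul_sub_mul_inv Y (classMeans Nc X₀)
    ((isUnit_transpose _).mpr hred) (isUnit_one_add_of_posSemidef hpsd)
  rw [← mul_calN_inv_mul_transpose_eq_conj_one_add_Del2 hred] at hdiff
  refine ⟨hdiff, ?_⟩
  rw [hdiff, opNorm_neg]
  exact opNorm_mul_inv_one_add_mul_le hpsd Y _
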